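/- Let G be a nontrivial finite abelian group, let S be a UFIM over G∖{0} with irreducible factorization [ℓ] = I_1 ⊔ ⋯ ⊔ I_m, and for each 1 ≤ i ≤ m choose an element g_i ∈ S(I_i). Then Σ_{i=1}^m 1/ord(g_i) ≤ m/P^−(|G|) ≤ (log_2 |G|)/P^−(|G|), where P^−(n) denotes the smallest prime divisor of n. -/

import Mathlib

open Finset

/-- `S(I)` is minimal zero-sum: nonempty, zero-sum, and no proper nonempty
subfamily is zero-sum. -/
def IsMinZeroSum {G : Type*} [AddCommGroup G] {ℓ : ℕ} (g : Fin ℓ → G)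
    (I : Finset (Fin ℓ)) : Prop :=
  I.Nonempty ∧ ∑ i ∈ I, g i = 0 ∧ ∀ J ⊂ I, J.Nonempty → ∑ i ∈ J, g i ≠ 0

/-- `P` is an irreducible factorization of the indexed multiset `g`: a partition
of the index set all of whose parts are minimal zero-sum. -/
def IsFactorization {G : Type*} [AddCommGroup G] {ℓ : ℕ} (g : Fin ℓ → G)
    (P : Finpartition (Finset.univ : Finset (Fin ℓ))) : Prop :=
  ∀ I ∈ P.parts, IsMinZeroSum g I

/-- `g` is a unique factorization indexed multiset (UFIM) over `G∖{0}`: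
all elements are nonzero and there is exactly one irreducible factorization. -/
def IsUFIM {G : Type*} [AddCommGroup G] {ℓ : ℕ} (g : Fin ℓ → G) : Prop :=
  (∀ i, g i ≠ 0) ∧
  ∃! P : Finpartition (Finset.univ : Finset (Fin ℓ)), IsFactorization g P

/-- The cross number `k(S) = ∑ 1/ord(g_i)`. -/
noncomputable def crossNum {G : Type*} [AddCommGroup G] {ℓ : ℕ} (g : Fin ℓ → G) : ℝ :=
  ∑ i, (1 : ℝ) / (addOrderOf (g i) : ℝ)

/-- `K₁(G)`: the maximal cross number of a UFIM over `G∖{0}`. -/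
noncomputable def K1 (G : Type*) [AddCommGroup G] : ℝ :=
  sSup {x : ℝ | ∃ (ℓ : ℕ) (g : Fin ℓ → G), IsUFIM g ∧ crossNum g = x}

/-- `N₁(G)`: the maximal length of a UFIM over `G∖{0}`. -/
noncomputable def N1 (G : Type*) [AddCommGroup G] : ℕ :=
  sSup {n : ℕ | ∃ g : Fin n → G, IsUFIM g}

/-- `K(G)`: the maximal cross number of a minimal zero-sum indexed multiset over `G∖{0}`. -/
noncomputable def Kcross (G : Type*) [AddCommGroup G] : ℝ :=
  sSup {x : ℝ | ∃ (ℓ : ℕ) (g : Fin ℓ → G), (∀ i, g i ≠ 0) ∧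
    IsMinZeroSum g Finset.univ ∧ crossNum g = x}

/-- `g` is zero-sum free: no nonempty subfamily is zero-sum. -/
def IsZeroSumFree {G : Type*} [AddCommGroup G] {ℓ : ℕ} (g : Fin ℓ → G) : Prop :=
  ∀ I : Finset (Fin ℓ), I.Nonempty → ∑ i ∈ I, g i ≠ 0

/-- The little cross number `k(G)`: the maximal cross number of a zero-sum free
indexed multiset over `G∖{0}`. -/
noncomputable def littleCross (G : Type*) [AddCommGroup G] : ℝ :=
  sSup {x : ℝ | ∃ (ℓ : ℕ) (g : Fin ℓ → G), (∀ i, g i ≠ 0) ∧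
    IsZeroSumFree g ∧ crossNum g = x}

/-!
In a UFIM, factoring the complement of a minimal zero-sum `S(I)` and adjoining `I` gives an
irreducible factorization of the whole multiset, so by uniqueness `I` is one of its parts; hence
every zero-sum `S(T)` is a union of parts. Let `R` contain at most one index from each part. As
`-g_i` is the sum of the rest of the part of `i`, an equality `∑_{i ∈ A} g_i = ∑_{i ∈ B} g_i` with
`A, B ⊆ R` gives a zero-sum subfamily, made of `A` and of what the parts of the elements of `B`
contain besides these elements. It is a union of parts only if `A = B`. So the `2 ^ m` subset sums
of a set of representatives of the `m` parts are distinct, and `m ≤ log₂ |G|`. The other inequality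
holds term by term, as the order of a nonzero element is a divisor of `|G|` other than `1`.
-/

theorem part_eq_part_of_mem_part {α : Type*} [DecidableEq α] {s : Finset α} {P : Finpartition s}
    {a b : α} (h : a ∈ P.part b) : P.part a = P.part b :=
  P.part_eq_of_mem (P.part_mem.2 (P.part_nonempty.1 ⟨a, h⟩)) h

section ZeroSum

variable {G : Type*} [AddCommGroup G] {ℓ : ℕ} {g : Fin ℓ → G}

theorem IsMinZeroSum.nontrivial {I : Finset (Fin ℓ)} (hI : IsMinZeroSum g I)
    (hg : ∀ i ∈ I, g i ≠ 0) : I.Nontrivial := by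
  obtain ⟨hne, hsum, -⟩ := hI
  obtain ⟨i, rfl⟩ | hnt := hne.exists_eq_singleton_or_nontrivial
  · exact absurd (by simpa using hsum) (hg i (mem_singleton_self i))
  · exact hnt

theorem exists_isMinZeroSum_subset {T : Finset (Fin ℓ)} (hT : T.Nonempty)
    (hsum : ∑ i ∈ T, g i = 0) : ∃ I ⊆ T, IsMinZeroSum g I := by
  obtain ⟨I, hIT, hI⟩ := exists_minimal_le_of_wellFoundedLT
    (fun J : Finset (Fin ℓ) ↦ J.Nonempty ∧ ∑ i ∈ J, g i = 0) T ⟨hT, hsum⟩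
  exact ⟨I, hIT, hI.prop.1, hI.prop.2, fun J hJI hJ hJ0 ↦ hI.not_prop_of_lt hJI ⟨hJ, hJ0⟩⟩

theorem exists_finpartition_isMinZeroSum {T : Finset (Fin ℓ)} (hsum : ∑ i ∈ T, g i = 0) :
    ∃ Q : Finpartition T, ∀ I ∈ Q.parts, IsMinZeroSum g I := by
  induction T using Finset.strongInduction with
  | H T ih =>
    obtain rfl | hT := T.eq_empty_or_nonempty
    · exact ⟨Finpartition.empty _, by simp⟩
    obtain ⟨I, hIT, hI⟩ := exists_isMinZeroSum_subset hT hsum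
    have hsum' : ∑ i ∈ T \ I, g i = 0 := by rw [sum_sdiff_eq_sub hIT, hsum, hI.2.1, sub_zero]
    obtain ⟨Q, hQ⟩ := ih (T \ I) (sdiff_ssubset hIT hI.1) hsum'
    refine ⟨Q.extend hI.1.ne_empty sdiff_disjoint (sdiff_union_of_subset hIT), fun J hJ ↦ ?_⟩
    obtain rfl | hJ := mem_insert.1 hJ
    exacts [hI, hQ J hJ]

variable {P : Finpartition (univ : Finset (Fin ℓ))}

theorem IsFactorization.sum_eq_zero (hP : IsFactorization g P) : ∑ i, g i = 0 := by
  rw [← P.biUnion_parts, sum_biUnion P.disjoint]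
  exact Finset.sum_eq_zero fun I hI ↦ (hP I hI).2.1

theorem IsFactorization.isMinZeroSum_part (hP : IsFactorization g P) (i : Fin ℓ) :
    IsMinZeroSum g (P.part i) :=
  hP _ (P.part_mem.2 (mem_univ i))

theorem IsFactorization.sum_part_erase (hP : IsFactorization g P) (i : Fin ℓ) :
    ∑ j ∈ (P.part i).erase i, g j = -g i := by
  rw [sum_erase_eq_sub (P.mem_part (mem_univ i)), (hP.isMinZeroSum_part i).2.1, zero_sub]

theorem IsUFIM.mem_parts_of_isMinZeroSum (hg : IsUFIM g) (hP : IsFactorization g P)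
    {I : Finset (Fin ℓ)} (hI : IsMinZeroSum g I) : I ∈ P.parts := by
  have hcompl : ∑ i ∈ Iᶜ, g i = 0 := by
    rw [← hP.sum_eq_zero, ← sum_compl_add_sum I g, hI.2.1, add_zero]
  obtain ⟨Q, hQ⟩ := exists_finpartition_isMinZeroSum hcompl
  let Q' : Finpartition (univ : Finset (Fin ℓ)) :=
    Q.extend hI.1.ne_empty disjoint_compl_left compl_sup_eq_top
  have hQ' : IsFactorization g Q' := by
    intro J hJ
    obtain rfl | hJ := mem_insert.1 hJ
    exacts [hI, hQ J hJ]
  rw [hg.2.unique hP hQ']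
  exact mem_insert_self I Q.parts

theorem IsUFIM.part_subset_of_sum_eq_zero (hg : IsUFIM g) (hP : IsFactorization g P)
    {T : Finset (Fin ℓ)} (hT : ∑ i ∈ T, g i = 0) {i : Fin ℓ} (hi : i ∈ T) : P.part i ⊆ T := by
  obtain ⟨Q, hQ⟩ := exists_finpartition_isMinZeroSum hT
  obtain ⟨I, hI, hiI⟩ := Q.exists_mem hi
  rw [P.part_eq_of_mem (hg.mem_parts_of_isMinZeroSum hP (hQ I hI)) hiI]
  exact Q.le hI

theorem IsFactorization.sum_union_biUnion_part_erase (hP : IsFactorization g P)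
    {A B : Finset (Fin ℓ)} (hAB : Set.InjOn P.part (A ∪ B)) :
    ∑ i ∈ A ∪ B.biUnion (fun j ↦ (P.part j).erase j), g i = ∑ i ∈ A, g i - ∑ i ∈ B, g i := by
  have hdisj : Disjoint A (B.biUnion fun j ↦ (P.part j).erase j) := by
    simp only [disjoint_right, mem_biUnion, mem_erase]
    rintro i ⟨j, hj, hij, hi⟩ hiA
    exact hij (hAB (.inl hiA) (.inr hj) (part_eq_part_of_mem_part hi))
  have hpairwise : (B : Set (Fin ℓ)).PairwiseDisjoint fun j ↦ (P.part j).erase j := by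
    intro j hj k hk hjk
    refine disjoint_left.2 fun i hij hik ↦ hjk (hAB (.inr hj) (.inr hk) ?_)
    rw [← part_eq_part_of_mem_part (mem_of_mem_erase hij),
      part_eq_part_of_mem_part (mem_of_mem_erase hik)]
  rw [sum_union hdisj, sum_biUnion hpairwise, sum_congr rfl fun j _ ↦ hP.sum_part_erase j,
    sum_neg_distrib, sub_eq_add_neg]

theorem IsUFIM.subset_of_sum_eq (hg : IsUFIM g) (hP : IsFactorization g P)
    {A B : Finset (Fin ℓ)} (hAB : Set.InjOn P.part (A ∪ B))
    (h : ∑ i ∈ A, g i = ∑ i ∈ B, g i) : A ⊆ B := by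
  intro i hi
  have hsum := (hP.sum_union_biUnion_part_erase hAB).trans (sub_eq_zero.2 h)
  obtain ⟨k, hk, hki⟩ := ((hP.isMinZeroSum_part i).nontrivial fun j _ ↦ hg.1 j).exists_ne i
  have hpart : P.part k = P.part i := part_eq_part_of_mem_part hk
  have hkA : k ∉ A := fun hkA ↦ hki (hAB (.inl hkA) (.inl hi) hpart)
  obtain ⟨j, hj, hkj⟩ : ∃ j ∈ B, k ∈ (P.part j).erase j := by
    have hk' := hg.part_subset_of_sum_eq_zero hP hsum (mem_union_left _ hi) hk
    exact mem_biUnion.1 ((mem_union.1 hk').resolve_left hkA)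
  have hij : i = j := hAB (.inl hi) (.inr hj) <|
    hpart.symm.trans (part_eq_part_of_mem_part (mem_of_mem_erase hkj))
  rwa [hij]

theorem IsUFIM.injOn_sum_powerset (hg : IsUFIM g) (hP : IsFactorization g P)
    {R : Finset (Fin ℓ)} (hR : Set.InjOn P.part R) :
    Set.InjOn (fun A : Finset (Fin ℓ) ↦ ∑ i ∈ A, g i) R.powerset := by
  intro A hA B hB h
  have hAR := mem_powerset.1 hA
  have hBR := mem_powerset.1 hB
  exact (hg.subset_of_sum_eq hP (hR.mono (Set.union_subset hAR hBR)) h).antisymm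
    (hg.subset_of_sum_eq hP (hR.mono (Set.union_subset hBR hAR)) h.symm)

theorem IsUFIM.two_pow_card_parts_le [Fintype G] (hg : IsUFIM g) (hP : IsFactorization g P) :
    2 ^ #P.parts ≤ Fintype.card G := by
  obtain ⟨R, -, hR⟩ := P.exists_subset_part_bijOn
  have hcard : #R = #P.parts := card_nbij P.part hR.mapsTo hR.injOn hR.surjOn
  rw [← hcard, ← card_powerset, ← card_univ]
  exact card_le_card_of_injOn _ (fun _ _ ↦ mem_univ _) (hg.injOn_sum_powerset hP hR.injOn)

end ZeroSum

theorem minFac_card_le_addOrderOf {G : Type*} [AddGroup G] [Fintype G] {x : G} (hx : x ≠ 0) :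
    (Fintype.card G).minFac ≤ addOrderOf x := by
  have hne : addOrderOf x ≠ 1 := mt AddMonoid.addOrderOf_eq_one_iff.1 hx
  have hpos : 0 < addOrderOf x := addOrderOf_pos x
  exact Nat.minFac_le_of_dvd (by lia) addOrderOf_dvd_card

/-- Proposition: if `S` is a UFIM over `G∖{0}` (`G` a nontrivial finite abelian group)
with irreducible factorization `I_1 ⊔ ⋯ ⊔ I_m` and `g_i ∈ S(I_i)` is chosen for each `i`,
then `Σ_{i=1}^m 1/ord(g_i) ≤ m/P⁻(|G|) ≤ (log₂ |G|)/P⁻(|G|)`. -/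
theorem sum_chosen_orders_le {G : Type*} [AddCommGroup G] [Fintype G] [Nontrivial G]
    {ℓ : ℕ} (g : Fin ℓ → G) (hg : IsUFIM g)
    (P : Finpartition (Finset.univ : Finset (Fin ℓ))) (hP : IsFactorization g P)
    (sel : Finset (Fin ℓ) → Fin ℓ) (hsel : ∀ I ∈ P.parts, sel I ∈ I) :
    (∑ I ∈ P.parts, (1 : ℝ) / (addOrderOf (g (sel I)) : ℝ)) ≤
      (P.parts.card : ℝ) / (Nat.minFac (Fintype.card G) : ℝ) ∧
    (P.parts.card : ℝ) / (Nat.minFac (Fintype.card G) : ℝ) ≤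
      Real.logb 2 (Fintype.card G) / (Nat.minFac (Fintype.card G) : ℝ) := by
  have hpos : (0 : ℝ) < (Fintype.card G).minFac := mod_cast Nat.minFac_pos _
  constructor
  · rw [div_eq_mul_one_div, ← nsmul_eq_mul]
    refine sum_le_card_nsmul _ _ _ fun I _ ↦ one_div_le_one_div_of_le hpos ?_
    exact_mod_cast minFac_card_le_addOrderOf (hg.1 (sel I))
  · have hlog : (#P.parts : ℝ) ≤ Real.logb 2 (Fintype.card G) := by
      rw [Real.le_logb_iff_rpow_le one_lt_two (mod_cast Fintype.card_pos), Real.rpow_natCast]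
      exact_mod_cast hg.two_pow_card_parts_le hP
    exact div_le_div_of_nonneg_right hlog hpos.le
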